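/- Let d, k, T be positive integers with T ≥ 3 and kT ≤ d, A* ∈ ℝ^{d×d}, and U_t* ∈ ℝ^{d×k} for t = 1,…,T satisfying the task-diversity assumption. Suppose Â ∈ ℝ^{d×d} and Û_1,…,Û_T ∈ ℝ^{d×k} satisfy 𝓛(Â, Û_1,…,Û_T) = 0, where 𝓛 is the Meta-LoRA loss. Then the column space of Û_t equals the column space of U_t* for every t ∈ {1,…,T}, i.e., im(Û_t) = im(U_t*) for all t. -/

import Mathlib

open Matrix BigOperators

noncomputable section

/-- Squared Frobenius norm of a real matrix. -/
def frobSq {m n : Type*} [Fintype m] [Fintype n] (M : Matrix m n ℝ) : ℝ :=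
  ∑ i, ∑ j, (M i j) ^ 2

theorem aux_key {m n : Type*} [Fintype m] [Fintype n] [DecidableEq n]
    (M N : Matrix m n ℝ) (D : Matrix n n ℝ) (W : Matrix n m ℝ) (hD : D * D = 1)
    (h : M * D * Mᵀ = N * D * Nᵀ) (hW : W * M = 1) : N = M * (W * N) := by
  have hW' : Mᵀ * Wᵀ = 1 := by rw [← Matrix.transpose_mul, hW, Matrix.transpose_one]
  have h1 : M * D = N * D * (W * N)ᵀ := by
    calc M * D = M * D * (Mᵀ * Wᵀ) := by rw [hW', Matrix.mul_one]
      _ = (M * D * Mᵀ) * Wᵀ := by simp only [Matrix.mul_assoc]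
      _ = _ := by rw [h, Matrix.transpose_mul]; simp only [Matrix.mul_assoc]
  have h2 : M = N * (D * (W * N)ᵀ * D) := by
    calc M = M * D * D := by rw [Matrix.mul_assoc, hD, Matrix.mul_one]
      _ = _ := by rw [h1]; simp only [Matrix.mul_assoc]
  have h3 : (W * N) * (D * (W * N)ᵀ * D) = 1 := by
    rw [Matrix.mul_assoc W N, ← h2, hW]
  have h4 := mul_eq_one_comm.mp h3
  calc N = N * ((D * (W * N)ᵀ * D) * (W * N)) := by rw [h4, Matrix.mul_one]
    _ = (N * (D * (W * N)ᵀ * D)) * (W * N) := by rw [← Matrix.mul_assoc N]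
    _ = _ := by rw [← h2]

theorem aux_pair {m n : Type*} [Fintype m] [Fintype n] [DecidableEq n]
    (A B A' B' : Matrix m n ℝ) (V W : Matrix n m ℝ)
    (h : A * Aᵀ - B * Bᵀ = A' * A'ᵀ - B' * B'ᵀ)
    (h1 : V * A = 1) (h2 : V * B = 0) (h3 : W * A = 0) (h4 : W * B = 1) :
    B' = A * (V * B') + B * (W * B') := by
  have key := aux_key (fromCols A B) (fromCols A' B') (fromBlocks 1 0 0 (-1)) (fromRows V W)
    (by simp [fromBlocks_multiply])
    (by simpa [fromCols_mul_fromBlocks, transpose_fromCols, fromCols_mul_fromRows,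
          sub_eq_add_neg] using h)
    (by simp [fromRows_mul_fromCols, h1, h2, h3, h4])
  simp only [fromRows_mul_fromCols, fromCols_mul_fromBlocks] at key
  exact (fromCols_inj key).2

theorem aux_leftInv (d k T : ℕ) (Ustar : Fin T → Matrix (Fin d) (Fin k) ℝ)
    (hdiv : (Matrix.of fun i (p : Fin T × Fin k) => Ustar p.1 i p.2).rank = k * T) :
    ∃ W : Fin T → Matrix (Fin k) (Fin d) ℝ,
      ∀ s t, W s * Ustar t = if s = t then 1 else 0 := by
  set M : Matrix (Fin d) (Fin T × Fin k) ℝ := Matrix.of fun i p => Ustar p.1 i p.2 with hM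
  have hker : LinearMap.ker M.mulVecLin = ⊥ := by
    have := LinearMap.finrank_range_add_finrank_ker M.mulVecLin
    have h2 : Module.finrank ℝ (LinearMap.range M.mulVecLin) = k * T := hdiv
    rw [h2] at this
    simp [mul_comm T k] at this
    simpa using this
  obtain ⟨g, hg⟩ := LinearMap.exists_leftInverse_of_injective M.mulVecLin hker
  have hW : LinearMap.toMatrix' g * M = 1 := by
    have := congrArg LinearMap.toMatrix' hg
    rw [LinearMap.toMatrix'_comp] at this
    simpa [← Matrix.toLin'_apply'] using this
  refine ⟨fun s => Matrix.of fun a i => LinearMap.toMatrix' g (s, a) i, fun s t => ?_⟩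
  ext a b
  have := congrFun (congrFun hW (s, a)) (t, b)
  have e : (LinearMap.toMatrix' g * M) (s, a) (t, b) =
    ((Matrix.of fun a i => LinearMap.toMatrix' g (s, a) i) * Ustar t : Matrix (Fin k) (Fin k) ℝ) a b := by
    simp [Matrix.mul_apply, hM]
  rw [← e, this]
  by_cases hst : s = t <;> simp [hst, Matrix.one_apply]

theorem aux_frob {m n : Type*} [Fintype m] [Fintype n] (M : Matrix m n ℝ) (h : frobSq M = 0) :
    M = 0 := by
  unfold frobSq at h
  have h1 := (Finset.sum_eq_zero_iff_of_nonneg (s := Finset.univ)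
    (f := fun i => ∑ j, (M i j) ^ 2)
    (fun i _ => Finset.sum_nonneg fun j _ => sq_nonneg (M i j))).mp h
  ext i j
  have h2 := (Finset.sum_eq_zero_iff_of_nonneg (s := Finset.univ)
    (f := fun j => (M i j) ^ 2) (fun j _ => sq_nonneg (M i j))).mp (h1 i (Finset.mem_univ i))
  exact pow_eq_zero_iff (two_ne_zero) |>.mp (h2 j (Finset.mem_univ j))

theorem aux_frob_nonneg {m n : Type*} [Fintype m] [Fintype n] (M : Matrix m n ℝ) :
    0 ≤ frobSq M :=
  Finset.sum_nonneg fun i _ => Finset.sum_nonneg fun j _ => sq_nonneg _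

/-- With `T ≥ 3` diverse tasks, any zero of the Meta-LoRA loss recovers the ground-truth
column spaces: `im(Ûₜ) = im(Uₜ*)` for every task `t`. -/
theorem metaLoRA_column_space_recovery
    (d k T : ℕ) (hd : 0 < d) (hk : 0 < k) (hT : 3 ≤ T) (hkT : k * T ≤ d)
    (Astar : Matrix (Fin d) (Fin d) ℝ)
    (Ustar : Fin T → Matrix (Fin d) (Fin k) ℝ)
    (hdiv : (Matrix.of fun i (p : Fin T × Fin k) => Ustar p.1 i p.2).rank = k * T)
    (Ahat : Matrix (Fin d) (Fin d) ℝ)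
    (Uhat : Fin T → Matrix (Fin d) (Fin k) ℝ)
    (hloss : (1 / 2) * ∑ t, frobSq
        (Astar + Ustar t * (Ustar t)ᵀ - Ahat - Uhat t * (Uhat t)ᵀ) = 0) :
    ∀ t : Fin T,
      LinearMap.range (Uhat t).mulVecLin = LinearMap.range (Ustar t).mulVecLin := by
  obtain ⟨W, hW⟩ := aux_leftInv d k T Ustar hdiv
  have hz : ∀ t, Astar + Ustar t * (Ustar t)ᵀ - Ahat - Uhat t * (Uhat t)ᵀ = 0 := by
    intro t
    have h0 : ∑ t, frobSq (Astar + Ustar t * (Ustar t)ᵀ - Ahat - Uhat t * (Uhat t)ᵀ) = 0 := by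
      linarith
    rw [Finset.sum_eq_zero_iff_of_nonneg (fun i _ => aux_frob_nonneg _)] at h0
    exact aux_frob _ (h0 t (Finset.mem_univ t))
  have hdiff : ∀ s t, Ustar s * (Ustar s)ᵀ - Ustar t * (Ustar t)ᵀ
      = Uhat s * (Uhat s)ᵀ - Uhat t * (Uhat t)ᵀ := by
    intro s t
    have e : (Ustar s * (Ustar s)ᵀ - Ustar t * (Ustar t)ᵀ)
      - (Uhat s * (Uhat s)ᵀ - Uhat t * (Uhat t)ᵀ) =
      (Astar + Ustar s * (Ustar s)ᵀ - Ahat - Uhat s * (Uhat s)ᵀ)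
      - (Astar + Ustar t * (Ustar t)ᵀ - Ahat - Uhat t * (Uhat t)ᵀ) := by abel
    rw [hz, hz, sub_zero] at e
    exact sub_eq_zero.mp e
  have hpair : ∀ s t, s ≠ t →
      Uhat t = Ustar s * (W s * Uhat t) + Ustar t * (W t * Uhat t) := by
    intro s t hst
    exact aux_pair _ _ _ _ _ _ (hdiff s t) (by simp [hW]) (by simp [hW, hst])
      (by simp [hW, hst.symm]) (by simp [hW])
  have hex : ∀ s t : Fin T, ∃ r, r ≠ s ∧ r ≠ t := by
    intro s t
    have hc : ({s, t} : Finset (Fin T)).card < Fintype.card (Fin T) := by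
      have := Finset.card_le_two (a := s) (b := t)
      rw [Fintype.card_fin]; omega
    obtain ⟨r, hr⟩ := Finset.exists_mem_notMem_of_card_lt_card
      (s := ({s, t} : Finset (Fin T))) (t := Finset.univ) (by simpa using hc)
    refine ⟨r, ?_⟩
    simpa [not_or] using hr
  have hoff : ∀ s t, s ≠ t → W s * Uhat t = 0 := by
    intro s t hst
    obtain ⟨r, hrs, hrt⟩ := hex s t
    rw [hpair r t hrt, Matrix.mul_add, ← Matrix.mul_assoc (W s) (Ustar r),
      ← Matrix.mul_assoc (W s) (Ustar t), hW, hW,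
      if_neg hrs.symm, if_neg hst]
    simp
  intro t
  obtain ⟨s, hst, -⟩ := hex t t
  have hY : Uhat t = Ustar t * (W t * Uhat t) := by
    have := hpair s t hst
    rw [hoff s t hst, Matrix.mul_zero, zero_add] at this
    exact this
  have hYY : (W t * Uhat t) * (W t * Uhat t)ᵀ = 1 := by
    have e := congrArg (fun X => W t * X * (W t)ᵀ) (hdiff t s)
    simp only [Matrix.mul_sub, Matrix.sub_mul, ← Matrix.mul_assoc] at e
    rw [hW, hW, hoff t s hst.symm, if_pos rfl, if_neg hst.symm] at e
    simp only [Matrix.zero_mul, sub_zero, Matrix.one_mul] at e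
    rw [← Matrix.transpose_mul, hW, if_pos rfl, Matrix.transpose_one] at e
    rw [Matrix.transpose_mul, ← Matrix.mul_assoc]
    exact e.symm
  have hY2 : Ustar t = Uhat t * (W t * Uhat t)ᵀ := by
    calc Ustar t = Ustar t * ((W t * Uhat t) * (W t * Uhat t)ᵀ) := by
          rw [hYY, Matrix.mul_one]
      _ = (Ustar t * (W t * Uhat t)) * (W t * Uhat t)ᵀ := by rw [← Matrix.mul_assoc (Ustar t)]
      _ = _ := by rw [← hY]
  apply le_antisymm
  · rw [hY, Matrix.mulVecLin_mul]
    exact LinearMap.range_comp_le_range _ _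
  · conv_lhs => rw [hY2, Matrix.mulVecLin_mul]
    exact LinearMap.range_comp_le_range _ _
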